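/- Let D ≥ 1 be an integer and let a, b be real numbers with 0 < a < D, 0 < b < D and a + b > D. Then for every nonzero z ∈ ℝ^D the function x ↦ ‖x‖^{−a}‖x − z‖^{−b} is Lebesgue integrable on ℝ^D and π^{−D/2} ∫_{ℝ^D} ‖x‖^{−a}‖x − z‖^{−b} dx = [Γ((D−a)/2)·Γ((D−b)/2)·Γ((a+b−D)/2)] / [Γ(a/2)·Γ(b/2)·Γ(D − (a+b)/2)] · ‖z‖^{D−a−b}. -/

import Mathlib

open MeasureTheory

/-!
All integrands are nonnegative, so Tonelli's theorem justifies every exchange of integrals, and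
integrability comes with the value.

Feynman's parametrization
`A ^ (-α) * B ^ (-β) = Γ(α + β) / (Γ(α) Γ(β)) * ∫ u ^ (β - 1) * (A + u B) ^ (-(α + β)) du`, `u > 0`,
merges the two propagators `A = ‖x‖²`, `B = ‖x - z‖²` into a power of a single quadratic polynomial
in `x`. Completing the square and Schwinger's formula
`Γ(r) * c ^ (-r) = ∫ s ^ (r - 1) * exp (-c s) ds`, `s > 0`, reduce the `x`-integral to a Gaussian.
What remains is a beta integral in `u`, namely Feynman's formula again, with `A = B = 1`.
-/

section

open Set Real Module

lemma lintegral_ofReal_const_mul_of_eq {X : Type*} [MeasurableSpace X] {μ : Measure X} {c I : ℝ}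
    {f : X → ℝ} (hc : 0 ≤ c) (h : ∫⁻ x, ENNReal.ofReal (f x) ∂μ = ENNReal.ofReal I) :
    ∫⁻ x, ENNReal.ofReal (c * f x) ∂μ = ENNReal.ofReal (c * I) := by
  simp_rw [ENNReal.ofReal_mul hc]
  rw [lintegral_const_mul' _ _ ENNReal.ofReal_ne_top, h]

lemma lintegral_ofReal_eq_of_integral_eq {X : Type*} [MeasurableSpace X] {μ : Measure X}
    {f : X → ℝ} {I : ℝ} (hf : 0 ≤ᵐ[μ] f) (hI : I ≠ 0) (h : ∫ x, f x ∂μ = I) :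
    ∫⁻ x, ENNReal.ofReal (f x) ∂μ = ENNReal.ofReal I := by
  -- `I ≠ 0` gives integrability, since the Bochner integral of a non-integrable function is `0`.
  rw [← h, ofReal_integral_eq_lintegral_ofReal (.of_integral_ne_zero (h ▸ hI)) hf]

lemma integrable_and_integral_eq_of_lintegral_ofReal_eq {X : Type*} [MeasurableSpace X]
    {μ : Measure X} {f : X → ℝ} {I : ℝ} (hfm : AEStronglyMeasurable f μ) (hf : 0 ≤ᵐ[μ] f)
    (hI : 0 ≤ I) (h : ∫⁻ x, ENNReal.ofReal (f x) ∂μ = ENNReal.ofReal I) :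
    Integrable f μ ∧ ∫ x, f x ∂μ = I := by
  refine ⟨⟨hfm, ?_⟩, ?_⟩
  · rw [hasFiniteIntegral_iff_ofReal hf, h]
    exact ENNReal.ofReal_lt_top
  · rw [integral_eq_lintegral_of_nonneg_ae hf hfm, h, ENNReal.toReal_ofReal hI]

lemma lintegral_rpow_mul_exp_neg_mul_Ioi {p r : ℝ} (hp : 0 < p) (hr : 0 < r) :
    ∫⁻ s in Ioi (0 : ℝ), ENNReal.ofReal (s ^ (p - 1) * exp (-(r * s)))
      = ENNReal.ofReal (Gamma p * r ^ (-p)) := by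
  refine lintegral_ofReal_eq_of_integral_eq ?_ (by positivity) ?_
  · filter_upwards [ae_restrict_mem measurableSet_Ioi] with s (hs : 0 < s)
    positivity
  · rw [integral_rpow_mul_exp_neg_mul_Ioi hp hr, one_div, inv_rpow hr.le, rpow_neg hr.le, mul_comm]

/-- Feynman's parametrization of `A ^ (-p) * B ^ (-q)`, over a half-line. -/
lemma lintegral_rpow_mul_add_mul_rpow_neg_Ioi {p q A B : ℝ} (hp : 0 < p) (hq : 0 < q)
    (hA : 0 < A) (hB : 0 < B) :
    ∫⁻ u in Ioi (0 : ℝ), ENNReal.ofReal (u ^ (q - 1) * (A + u * B) ^ (-(p + q)))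
      = ENNReal.ofReal (Gamma p * Gamma q / Gamma (p + q) * (A ^ (-p) * B ^ (-q))) := by
  calc
    _ = ∫⁻ u in Ioi (0 : ℝ), ∫⁻ s in Ioi (0 : ℝ), ENNReal.ofReal
          (u ^ (q - 1) / Gamma (p + q) * (s ^ (p + q - 1) * exp (-((A + u * B) * s)))) := by
      refine setLIntegral_congr_fun measurableSet_Ioi fun u (hu : 0 < u) ↦ ?_
      rw [lintegral_ofReal_const_mul_of_eq (by positivity)
        (lintegral_rpow_mul_exp_neg_mul_Ioi (by positivity) (by positivity))]
      congr 1
      field_simp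
    _ = ∫⁻ s in Ioi (0 : ℝ), ∫⁻ u in Ioi (0 : ℝ), ENNReal.ofReal
          (u ^ (q - 1) / Gamma (p + q) * (s ^ (p + q - 1) * exp (-((A + u * B) * s)))) := by
      refine lintegral_lintegral_swap (Measurable.aemeasurable ?_)
      unfold Function.uncurry
      fun_prop
    _ = ∫⁻ s in Ioi (0 : ℝ), ENNReal.ofReal
          (Gamma q / Gamma (p + q) * B ^ (-q) * (s ^ (p - 1) * exp (-(A * s)))) := by
      refine setLIntegral_congr_fun measurableSet_Ioi fun s (hs : 0 < s) ↦ ?_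
      have hsplit (u : ℝ) : u ^ (q - 1) / Gamma (p + q) *
          (s ^ (p + q - 1) * exp (-((A + u * B) * s))) =
          s ^ (p + q - 1) * exp (-(A * s)) / Gamma (p + q) *
            (u ^ (q - 1) * exp (-(s * B * u))) := by
        rw [show -((A + u * B) * s) = -(A * s) + -(s * B * u) by ring, exp_add]
        ring
      simp_rw [hsplit]
      rw [lintegral_ofReal_const_mul_of_eq (by positivity)
        (lintegral_rpow_mul_exp_neg_mul_Ioi hq (by positivity)),
        mul_rpow hs.le hB.le, show p - 1 = p + q - 1 + -q by ring, rpow_add hs]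
      congr 1
      ring
    _ = _ := by
      rw [lintegral_ofReal_const_mul_of_eq (by positivity)
        (lintegral_rpow_mul_exp_neg_mul_Ioi hp hA)]
      congr 1
      ring

lemma sq_norm_add_mul_sq_norm_sub {V : Type*} [NormedAddCommGroup V] [InnerProductSpace ℝ V]
    (x z : V) {u : ℝ} (hu : 1 + u ≠ 0) :
    ‖x‖ ^ 2 + u * ‖x - z‖ ^ 2
      = (1 + u) * ‖x - (u / (1 + u)) • z‖ ^ 2 + u / (1 + u) * ‖z‖ ^ 2 := by
  rw [norm_sub_sq_real, norm_sub_sq_real, inner_smul_right, norm_smul, mul_pow, norm_eq_abs, sq_abs]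
  field_simp
  ring

variable {V : Type*} [NormedAddCommGroup V] [InnerProductSpace ℝ V] [FiniteDimensional ℝ V]
  [MeasurableSpace V] [BorelSpace V]

variable (V) in
lemma lintegral_exp_neg_mul_sq_norm_add {c : ℝ} (hc : 0 < c) (b : ℝ) :
    ∫⁻ x : V, ENNReal.ofReal (exp (-(c * ‖x‖ ^ 2 + b)))
      = ENNReal.ofReal (exp (-b) * (π / c) ^ (finrank ℝ V / 2 : ℝ)) := by
  simp_rw [neg_add_rev, exp_add, ← neg_mul]
  refine lintegral_ofReal_const_mul_of_eq (exp_nonneg _) ?_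
  exact lintegral_ofReal_eq_of_integral_eq (.of_forall fun x ↦ exp_nonneg _) (by positivity)
    (GaussianFourier.integral_rexp_neg_mul_sq_norm hc)

variable (V) in
lemma lintegral_mul_sq_norm_add_rpow_neg {r A B : ℝ} (hr : (finrank ℝ V / 2 : ℝ) < r)
    (hA : 0 < A) (hB : 0 < B) :
    ∫⁻ x : V, ENNReal.ofReal ((A * ‖x‖ ^ 2 + B) ^ (-r))
      = ENNReal.ofReal (π ^ (finrank ℝ V / 2 : ℝ) * Gamma (r - finrank ℝ V / 2) / Gamma r *
          (A ^ (-(finrank ℝ V / 2 : ℝ)) * B ^ (-(r - finrank ℝ V / 2)))) := by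
  set d : ℝ := finrank ℝ V / 2 with hd
  have hd0 : 0 ≤ d := by positivity
  have hr0 : 0 < r := hd0.trans_lt hr
  calc
    _ = ∫⁻ x : V, ∫⁻ s in Ioi (0 : ℝ), ENNReal.ofReal
          ((Gamma r)⁻¹ * (s ^ (r - 1) * exp (-((A * ‖x‖ ^ 2 + B) * s)))) := by
      refine lintegral_congr fun x ↦ ?_
      rw [lintegral_ofReal_const_mul_of_eq (by positivity)
        (lintegral_rpow_mul_exp_neg_mul_Ioi hr0 (by positivity)),
        inv_mul_cancel_left₀ (by positivity)]
    _ = ∫⁻ s in Ioi (0 : ℝ), ∫⁻ x : V, ENNReal.ofReal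
          ((Gamma r)⁻¹ * (s ^ (r - 1) * exp (-((A * ‖x‖ ^ 2 + B) * s)))) := by
      refine lintegral_lintegral_swap (Measurable.aemeasurable ?_)
      unfold Function.uncurry
      fun_prop
    _ = ∫⁻ s in Ioi (0 : ℝ), ENNReal.ofReal
          ((Gamma r)⁻¹ * (π ^ d * A ^ (-d)) * (s ^ (r - d - 1) * exp (-(B * s)))) := by
      refine setLIntegral_congr_fun measurableSet_Ioi fun s (hs : 0 < s) ↦ ?_
      simp_rw [← mul_assoc (Gamma r)⁻¹, add_mul, mul_right_comm A]
      rw [lintegral_ofReal_const_mul_of_eq (by positivity)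
        (lintegral_exp_neg_mul_sq_norm_add V (mul_pos hA hs) (B * s)), ← hd,
        div_rpow pi_nonneg (by positivity), mul_rpow hA.le hs.le,
        show r - d - 1 = r - 1 + -d by ring, rpow_add hs, rpow_neg hs.le, rpow_neg hA.le]
      congr 1
      field_simp
    _ = _ := by
      rw [lintegral_ofReal_const_mul_of_eq (by positivity)
        (lintegral_rpow_mul_exp_neg_mul_Ioi (sub_pos.2 hr) hB)]
      congr 1
      ring

lemma lintegral_sq_norm_add_mul_sq_norm_sub_rpow_neg {r u : ℝ}
    (hr : (finrank ℝ V / 2 : ℝ) < r) (hu : 0 < u) {z : V} (hz : z ≠ 0) :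
    ∫⁻ x : V, ENNReal.ofReal ((‖x‖ ^ 2 + u * ‖x - z‖ ^ 2) ^ (-r))
      = ENNReal.ofReal (π ^ (finrank ℝ V / 2 : ℝ) * Gamma (r - finrank ℝ V / 2) / Gamma r *
          (u ^ (finrank ℝ V / 2 - r) * (1 + u) ^ (r - finrank ℝ V) *
            ‖z‖ ^ (finrank ℝ V - 2 * r))) := by
  have hu1 : 0 < 1 + u := by positivity
  have hz0 : 0 < ‖z‖ := norm_pos_iff.2 hz
  simp_rw [sq_norm_add_mul_sq_norm_sub _ z hu1.ne']
  rw [lintegral_sub_right_eq_self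
      (fun x : V ↦ ENNReal.ofReal (((1 + u) * ‖x‖ ^ 2 + u / (1 + u) * ‖z‖ ^ 2) ^ (-r))),
    lintegral_mul_sq_norm_add_rpow_neg V hr hu1 (by positivity)]
  congr 2
  rw [mul_rpow (by positivity) (by positivity), div_rpow hu.le hu1.le, neg_sub,
    ← rpow_natCast_mul hz0.le, Nat.cast_ofNat, mul_sub, mul_div_cancel₀ _ two_ne_zero,
    show r - (finrank ℝ V : ℝ) = -(finrank ℝ V / 2) + -(finrank ℝ V / 2 - r) by ring,
    rpow_add hu1, rpow_neg hu1.le (finrank ℝ V / 2 - r)]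
  ring

lemma lintegral_lintegral_rpow_mul_sq_norm_add_mul_sq_norm_sub_rpow_neg {α β : ℝ}
    (hα : α < finrank ℝ V / 2) (hβ : β < finrank ℝ V / 2) (hαβ : finrank ℝ V / 2 < α + β)
    {z : V} (hz : z ≠ 0) :
    ∫⁻ u in Ioi (0 : ℝ), ∫⁻ x : V,
        ENNReal.ofReal (u ^ (β - 1) * (‖x‖ ^ 2 + u * ‖x - z‖ ^ 2) ^ (-(α + β)))
      = ENNReal.ofReal (π ^ (finrank ℝ V / 2 : ℝ) *
          (Gamma (finrank ℝ V / 2 - α) * Gamma (finrank ℝ V / 2 - β) *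
            Gamma (α + β - finrank ℝ V / 2)) /
          (Gamma (α + β) * Gamma (finrank ℝ V - (α + β))) *
          ‖z‖ ^ (finrank ℝ V - 2 * (α + β))) := by
  set D : ℝ := (finrank ℝ V : ℝ) with hD
  set K : ℝ := π ^ (D / 2) * Gamma (α + β - D / 2) / Gamma (α + β) * ‖z‖ ^ (D - 2 * (α + β)) with hK
  have hK0 : 0 ≤ K := by
    have hαβ_pos : 0 < α + β := by linarith
    have : 0 < α + β - D / 2 := sub_pos.2 hαβ
    positivity
  calc
    _ = ∫⁻ u in Ioi (0 : ℝ), ENNReal.ofReal (K * (u ^ (D / 2 - α - 1) *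
          (1 + u * 1) ^ (-(D / 2 - β + (D / 2 - α))))) := by
      refine setLIntegral_congr_fun measurableSet_Ioi fun u (hu : 0 < u) ↦ ?_
      rw [lintegral_ofReal_const_mul_of_eq (by positivity)
        (lintegral_sq_norm_add_mul_sq_norm_sub_rpow_neg hαβ hu hz), ← hD,
        show D / 2 - α - 1 = β - 1 + (D / 2 - (α + β)) by ring, rpow_add hu,
        show -(D / 2 - β + (D / 2 - α)) = α + β - D by ring, hK, mul_one]
      congr 1
      ring
    _ = _ := by
      rw [lintegral_ofReal_const_mul_of_eq hK0
        (lintegral_rpow_mul_add_mul_rpow_neg_Ioi (sub_pos.2 hβ) (sub_pos.2 hα) one_pos one_pos),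
        one_rpow, one_rpow, hK,
        show D / 2 - β + (D / 2 - α) = D - (α + β) by ring]
      congr 1
      field_simp

lemma lintegral_sq_norm_rpow_neg_mul_sq_norm_sub_rpow_neg {α β : ℝ}
    (hα : α < finrank ℝ V / 2) (hβ : β < finrank ℝ V / 2) (hαβ : finrank ℝ V / 2 < α + β)
    {z : V} (hz : z ≠ 0) :
    ∫⁻ x : V, ENNReal.ofReal ((‖x‖ ^ 2) ^ (-α) * (‖x - z‖ ^ 2) ^ (-β))
      = ENNReal.ofReal (π ^ (finrank ℝ V / 2 : ℝ) *
          (Gamma (finrank ℝ V / 2 - α) * Gamma (finrank ℝ V / 2 - β) *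
            Gamma (α + β - finrank ℝ V / 2) /
            (Gamma α * Gamma β * Gamma (finrank ℝ V - (α + β))) *
            ‖z‖ ^ (finrank ℝ V - 2 * (α + β)))) := by
  have : Nontrivial V := nontrivial_of_ne z 0 hz
  have hα0 : 0 < α := by linarith
  have hβ0 : 0 < β := by linarith
  set C : ℝ := Gamma (α + β) / (Gamma α * Gamma β) with hC
  have hC0 : 0 ≤ C := by positivity
  calc
    _ = ∫⁻ x : V, ENNReal.ofReal C * ∫⁻ u in Ioi (0 : ℝ), ENNReal.ofReal
          (u ^ (β - 1) * (‖x‖ ^ 2 + u * ‖x - z‖ ^ 2) ^ (-(α + β))) := by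
      refine lintegral_congr_ae ?_
      filter_upwards [Measure.ae_ne volume 0, Measure.ae_ne volume z] with x hx hxz
      replace hxz : x - z ≠ 0 := sub_ne_zero.2 hxz
      rw [lintegral_rpow_mul_add_mul_rpow_neg_Ioi hα0 hβ0 (by positivity) (by positivity),
        ← ENNReal.ofReal_mul hC0, hC]
      congr 1
      field_simp
    _ = ENNReal.ofReal C * ∫⁻ u in Ioi (0 : ℝ), ∫⁻ x : V, ENNReal.ofReal
          (u ^ (β - 1) * (‖x‖ ^ 2 + u * ‖x - z‖ ^ 2) ^ (-(α + β))) := by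
      rw [lintegral_const_mul' _ _ ENNReal.ofReal_ne_top, lintegral_lintegral_swap]
      unfold Function.uncurry
      fun_prop
    _ = _ := by
      rw [lintegral_lintegral_rpow_mul_sq_norm_add_mul_sq_norm_sub_rpow_neg hα hβ hαβ hz,
        ← ENNReal.ofReal_mul hC0, hC]
      congr 1
      field_simp

theorem propagator_convolution_general {a b : ℝ} (ha : a < finrank ℝ V)
    (hb : b < finrank ℝ V) (hab : finrank ℝ V < a + b) {z : V} (hz : z ≠ 0) :
    Integrable (fun x : V ↦ ‖x‖ ^ (-a) * ‖x - z‖ ^ (-b)) ∧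
    π ^ (-(finrank ℝ V : ℝ) / 2) * ∫ x : V, ‖x‖ ^ (-a) * ‖x - z‖ ^ (-b)
      = Gamma ((finrank ℝ V - a) / 2) * Gamma ((finrank ℝ V - b) / 2) *
          Gamma ((a + b - finrank ℝ V) / 2) /
          (Gamma (a / 2) * Gamma (b / 2) * Gamma (finrank ℝ V - (a + b) / 2)) *
          ‖z‖ ^ (finrank ℝ V - a - b) := by
  have hrpow (y : V) (c : ℝ) : (‖y‖ ^ 2) ^ (-(c / 2)) = ‖y‖ ^ (-c) := by
    rw [← rpow_natCast_mul (norm_nonneg y), Nat.cast_ofNat]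
    ring_nf
  have hlint := lintegral_sq_norm_rpow_neg_mul_sq_norm_sub_rpow_neg (α := a / 2) (β := b / 2)
    (by linarith) (by linarith) (by linarith) hz
  simp_rw [hrpow, ← add_div, ← sub_div, mul_div_cancel₀ (a + b) two_ne_zero, ← sub_sub] at hlint
  rw [← sub_pos] at ha hb hab
  have ha0 : 0 < a := by linarith
  have hb0 : 0 < b := by linarith
  have hDab : 0 < finrank ℝ V - (a + b) / 2 := by linarith
  obtain ⟨hint, hval⟩ := integrable_and_integral_eq_of_lintegral_ofReal_eq
    (by fun_prop) (.of_forall fun x ↦ by positivity) (by positivity) hlint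
  refine ⟨hint, ?_⟩
  rw [hval, neg_div, rpow_neg pi_nonneg, inv_mul_cancel_left₀ (by positivity)]

end

/-- The convolution (chain) identity for two massless propagators:
`π^{−D/2} ∫ ‖x‖^{−a} ‖x − z‖^{−b} dx
  = Γ((D−a)/2)Γ((D−b)/2)Γ((a+b−D)/2) / (Γ(a/2)Γ(b/2)Γ(D−(a+b)/2)) · ‖z‖^{D−a−b}`. -/
theorem propagator_convolution
    (D : ℕ) (hD : 1 ≤ D) (a b : ℝ)
    (ha0 : 0 < a) (haD : a < D) (hb0 : 0 < b) (hbD : b < D) (hab : (D : ℝ) < a + b)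
    (z : EuclideanSpace ℝ (Fin D)) (hz : z ≠ 0) :
    Integrable (fun x : EuclideanSpace ℝ (Fin D) => ‖x‖ ^ (-a) * ‖x - z‖ ^ (-b)) ∧
    Real.pi ^ (-(D : ℝ) / 2) *
        ∫ x : EuclideanSpace ℝ (Fin D), ‖x‖ ^ (-a) * ‖x - z‖ ^ (-b)
      = Real.Gamma (((D : ℝ) - a) / 2) * Real.Gamma (((D : ℝ) - b) / 2) *
          Real.Gamma ((a + b - D) / 2) /
          (Real.Gamma (a / 2) * Real.Gamma (b / 2) * Real.Gamma ((D : ℝ) - (a + b) / 2)) *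
          ‖z‖ ^ ((D : ℝ) - a - b) := by
  rw [← finrank_euclideanSpace_fin (𝕜 := ℝ) (n := D)] at haD hbD hab
  simpa only [finrank_euclideanSpace_fin] using propagator_convolution_general haD hbD hab hz
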